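/- Let k be a commutative ring with unity, N ≥ 2 an integer, q ∈ k a primitive N-th root of unity, X a k-module, and φ, ψ k-linear endomorphisms of X satisfying ψ∘φ = q·(φ∘ψ). Then for every integer n with 1 ≤ n ≤ N, φ^n = Σ_{l=0}^{n} (−1)^l · q^{l(l−1)/2} · [n choose l] · (φ + ψ)^{n−l} ∘ ψ^{l}. -/

import Mathlib

/-- The `q`-integer `[m] = 1 + q + ⋯ + q^{m-1}`. -/
def qInt {k : Type*} [CommRing k] (q : k) (m : ℕ) : k := ∑ i ∈ Finset.range m, q ^ i

/-- The `q`-factorial `[m]! = [m][m-1]⋯[1]`, with `[0]! = 1`. -/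
def qFact {k : Type*} [CommRing k] (q : k) (m : ℕ) : k := ∏ i ∈ Finset.range m, qInt q (i + 1)

/-- `QBinomSpec q N m l c` says that `c` is *the* `q`-binomial coefficient `[m choose l]`
(for `0 ≤ l ≤ m ≤ N`): in the special cases `(l,m) = (0,N), (N,N)` it is `1` by convention,
and otherwise it is characterized by `[l]! ⬝ [m-l]! ⬝ c = [m]!`. -/
def QBinomSpec {k : Type*} [CommRing k] (q : k) (N m l : ℕ) (c : k) : Prop :=
  ((m = N ∧ (l = 0 ∨ l = N)) → c = 1) ∧
  (¬(m = N ∧ (l = 0 ∨ l = N)) → qFact q l * qFact q (m - l) * c = qFact q m)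

/-!
The relation `ψ * φ = q • (φ * ψ)` gives `ψ ^ l * φ = q ^ l • (φ * ψ ^ l)`. Writing the `φ` on the
right as `(φ + ψ) - ψ`, right multiplication by `φ` sends `(φ + ψ) ^ m * ψ ^ l` to
`q ^ l • ((φ + ψ) ^ (m + 1) * ψ ^ l - (φ + ψ) ^ m * ψ ^ (l + 1))`. Hence the coefficients of `φ ^ n`
satisfy a two-term recursion, which is the `q`-Pascal rule up to the factor
`(-1) ^ l * q ^ (l * (l - 1) / 2)`. This expands `φ ^ n` with the `q`-binomials of Pascal type, for
every `q`; since `[1], …, [N - 1]` are regular, `[l]! [n - l]!` can be cancelled in the equation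
`[l]! [n - l]! c = [n]!`, so its only solution is that `q`-binomial. For `n = N` and `l = 0` or
`l = N`, where `[N]!` need not be regular, both coefficients are `1`.
-/

/-- The Gaussian binomial coefficient `[n choose l]`, defined by the `q`-Pascal rule so that it
makes sense for every `q`, including those for which the `q`-factorials are zero divisors. -/
def qBinom {R : Type*} [Semiring R] (q : R) : ℕ → ℕ → R
  | _, 0 => 1
  | 0, _ + 1 => 0
  | n + 1, l + 1 => qBinom q n l + q ^ (l + 1) * qBinom q n (l + 1)

section Semiring

variable {R : Type*} [Semiring R] (q : R)

@[simp]
theorem qBinom_zero_right (n : ℕ) : qBinom q n 0 = 1 := by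
  simp [qBinom]

theorem qBinom_succ_succ (n l : ℕ) :
    qBinom q (n + 1) (l + 1) = qBinom q n l + q ^ (l + 1) * qBinom q n (l + 1) := by
  simp [qBinom]

theorem qBinom_eq_zero_of_lt {n l : ℕ} (h : n < l) : qBinom q n l = 0 := by
  induction n generalizing l with
  | zero => cases l with
    | zero => lia
    | succ l => simp [qBinom]
  | succ n ih => cases l with
    | zero => lia
    | succ l => simp [qBinom_succ_succ, ih (Nat.lt_of_succ_lt_succ h), ih (Nat.lt_of_succ_lt h)]

@[simp]
theorem qBinom_self (n : ℕ) : qBinom q n n = 1 := by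
  induction n with
  | zero => exact qBinom_zero_right q 0
  | succ n ih => simp [qBinom_succ_succ, ih, qBinom_eq_zero_of_lt q n.lt_succ_self]

end Semiring

section CommRing

variable {R : Type*} [CommRing R] (q : R)

theorem qInt_add (m n : ℕ) : qInt q (m + n) = qInt q m + q ^ m * qInt q n := by
  simp [qInt, Finset.sum_range_add, Finset.mul_sum, pow_add]

@[simp]
theorem qFact_zero : qFact q 0 = 1 :=
  Finset.prod_range_zero _

theorem qFact_succ (n : ℕ) : qFact q (n + 1) = qFact q n * qInt q (n + 1) :=
  Finset.prod_range_succ _ _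

theorem qFact_mul_qFact_mul_qBinom_add (l m : ℕ) :
    qFact q l * qFact q m * qBinom q (l + m) l = qFact q (l + m) := by
  induction l generalizing m with
  | zero => simp
  | succ l ihl =>
    induction m with
    | zero => simp
    | succ m ihm =>
      have left : qFact q l * qFact q (m + 1) * qBinom q (l + 1 + m) l = qFact q (l + 1 + m) := by
        rw [Nat.add_right_comm l 1 m]
        exact ihl (m + 1)
      have hInt : qInt q (l + 1 + m + 1) = qInt q (l + 1) + q ^ (l + 1) * qInt q (m + 1) :=
        qInt_add q (l + 1) (m + 1)
      rw [← Nat.add_assoc, qBinom_succ_succ, qFact_succ q (l + 1 + m), hInt]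
      rw [qFact_succ q l] at ihm ⊢
      rw [qFact_succ q m] at left ⊢
      linear_combination qInt q (l + 1) * left + q ^ (l + 1) * qInt q (m + 1) * ihm

theorem qFact_mul_qFact_mul_qBinom {n l : ℕ} (h : l ≤ n) :
    qFact q l * qFact q (n - l) * qBinom q n l = qFact q n := by
  simpa only [Nat.add_sub_of_le h] using qFact_mul_qFact_mul_qBinom_add q l (n - l)

variable {q}

theorem qInt_mem_nonZeroDivisors_of_pow_sub_one_mem {m : ℕ} (h : q ^ m - 1 ∈ nonZeroDivisors R) :
    qInt q m ∈ nonZeroDivisors R := by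
  rw [← geom_sum_mul] at h
  exact (mul_mem_nonZeroDivisors.1 h).1

theorem qFact_mem_nonZeroDivisors {m : ℕ}
    (h : ∀ i, 1 ≤ i → i ≤ m → qInt q i ∈ nonZeroDivisors R) : qFact q m ∈ nonZeroDivisors R :=
  prod_mem fun i hi ↦ h (i + 1) i.succ_pos (Finset.mem_range.1 hi)

theorem QBinomSpec.eq_qBinom {N n l : ℕ} {c : R}
    (hq : ∀ i, 1 ≤ i → i < N → qInt q i ∈ nonZeroDivisors R) (hnN : n ≤ N) (hln : l ≤ n)
    (hc : QBinomSpec q N n l c) : c = qBinom q n l := by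
  by_cases hend : n = N ∧ (l = 0 ∨ l = N)
  · rw [hc.1 hend]
    obtain ⟨rfl, rfl | rfl⟩ := hend <;> simp
  · have hl : qFact q l ∈ nonZeroDivisors R :=
      qFact_mem_nonZeroDivisors fun i hi hil ↦ hq i hi (by lia)
    have hnl : qFact q (n - l) ∈ nonZeroDivisors R :=
      qFact_mem_nonZeroDivisors fun i hi hil ↦ hq i hi (by lia)
    exact (mul_cancel_left_mem_nonZeroDivisors (mul_mem hl hnl)).1
      ((hc.2 hend).trans (qFact_mul_qFact_mul_qBinom q hln).symm)

end CommRing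

/-- The coefficient of `t ^ l` in the `q`-Pochhammer product `∏ i < n, (1 - q ^ i * t)`; these are
the coefficients in the expansion of `φ ^ n` in powers of `φ + ψ` and `ψ`. -/
def signedQBinom {R : Type*} [CommRing R] (q : R) (n l : ℕ) : R :=
  (-1) ^ l * q ^ (l * (l - 1) / 2) * qBinom q n l

section SignedQBinom

variable {R : Type*} [CommRing R] (q : R)

@[simp]
theorem signedQBinom_zero_right (n : ℕ) : signedQBinom q n 0 = 1 := by
  simp [signedQBinom]

theorem signedQBinom_eq_zero_of_lt {n l : ℕ} (h : n < l) : signedQBinom q n l = 0 := by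
  rw [signedQBinom, qBinom_eq_zero_of_lt q h, mul_zero]

theorem signedQBinom_succ_succ (n l : ℕ) :
    signedQBinom q (n + 1) (l + 1) =
      signedQBinom q n (l + 1) * q ^ (l + 1) - signedQBinom q n l * q ^ l := by
  simp only [signedQBinom, qBinom_succ_succ, Nat.triangle_succ]
  ring

end SignedQBinom

theorem pow_mul_eq_pow_smul_mul_pow {M A : Type*} [Monoid M] [Monoid A] [MulAction M A]
    [IsScalarTower M A A] [SMulCommClass M A A] {q : M} {a b : A}
    (h : b * a = q • (a * b)) (l : ℕ) : b ^ l * a = q ^ l • (a * b ^ l) := by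
  induction l with
  | zero => simp
  | succ l ih =>
    calc b ^ (l + 1) * a = q • (b ^ l * a * b) := by
          rw [pow_succ, mul_assoc, h, mul_smul_comm, mul_assoc]
      _ = q ^ (l + 1) • (a * b ^ (l + 1)) := by
          rw [ih, smul_mul_assoc, smul_smul, mul_assoc, ← pow_succ, ← pow_succ']

section Algebra

variable {R A : Type*} [CommRing R] [Ring A] [Algebra R A] {q : R} {a b : A}

theorem add_pow_mul_pow_mul (h : b * a = q • (a * b)) (m l : ℕ) :
    (a + b) ^ m * b ^ l * a =
      q ^ l • ((a + b) ^ (m + 1) * b ^ l - (a + b) ^ m * b ^ (l + 1)) := by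
  have ha : a * b ^ l = (a + b) * b ^ l - b ^ (l + 1) := by
    rw [add_mul, ← pow_succ', add_sub_cancel_right]
  rw [mul_assoc, pow_mul_eq_pow_smul_mul_pow h, ha, mul_smul_comm, mul_sub, ← mul_assoc, ← pow_succ]

theorem pow_eq_sum_signedQBinom_smul (h : b * a = q • (a * b)) (n : ℕ) :
    a ^ n = ∑ l ∈ Finset.range (n + 1), signedQBinom q n l • ((a + b) ^ (n - l) * b ^ l) := by
  induction n with
  | zero => simp
  | succ n ih =>
    let T (l : ℕ) : A := (a + b) ^ (n + 1 - l) * b ^ l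
    let w (l : ℕ) : R := signedQBinom q n l * q ^ l
    have term_mul : ∀ l ∈ Finset.range (n + 1),
        signedQBinom q n l • ((a + b) ^ (n - l) * b ^ l) * a = w l • T l - w l • T (l + 1) := by
      intro l hl
      have hln : n + 1 - l = n - l + 1 := Nat.succ_sub (Finset.mem_range_succ_iff.1 hl)
      simp only [T, w, smul_mul_assoc, add_pow_mul_pow_mul h, smul_smul, smul_sub, hln,
        Nat.add_sub_add_right]
    have shift : ∑ l ∈ Finset.range (n + 1), w l • T l =
        ∑ l ∈ Finset.range (n + 1), w (l + 1) • T (l + 1) + w 0 • T 0 := by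
      rw [← Finset.sum_range_succ' fun l ↦ w l • T l, Finset.sum_range_succ _ (n + 1)]
      simp [w, signedQBinom_eq_zero_of_lt q n.lt_succ_self]
    calc a ^ (n + 1)
        = ∑ l ∈ Finset.range (n + 1), (w l • T l - w l • T (l + 1)) := by
          rw [pow_succ, ih, Finset.sum_mul, Finset.sum_congr rfl term_mul]
      _ = ∑ l ∈ Finset.range (n + 1), (w (l + 1) - w l) • T (l + 1) + w 0 • T 0 := by
          simp only [Finset.sum_sub_distrib, shift, sub_smul]
          abel
      _ = ∑ l ∈ Finset.range (n + 1 + 1), signedQBinom q (n + 1) l • T l := by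
          simp [Finset.sum_range_succ' _ (n + 1), w, signedQBinom_succ_succ]

theorem pow_eq_q_alternating_sum_of_q_commute_general {N n : ℕ}
    (hq : ∀ i, 1 ≤ i → i < N → qInt q i ∈ nonZeroDivisors R) (h : b * a = q • (a * b))
    (hnN : n ≤ N) {c : ℕ → R} (hc : ∀ l ≤ n, QBinomSpec q N n l (c l)) :
    a ^ n = ∑ l ∈ Finset.range (n + 1),
      ((-1) ^ l * q ^ (l * (l - 1) / 2) * c l) • ((a + b) ^ (n - l) * b ^ l) := by
  rw [pow_eq_sum_signedQBinom_smul h]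
  refine Finset.sum_congr rfl fun l hl ↦ ?_
  have hln : l ≤ n := Finset.mem_range_succ_iff.1 hl
  rw [(hc l hln).eq_qBinom hq hnN hln, signedQBinom]

end Algebra

/-- if `ψ∘φ = q⬝(φ∘ψ)` then
`φ^n = Σ_{l=0}^{n} (−1)^l ⬝ q^{l(l−1)/2} ⬝ [n choose l] ⬝ (φ + ψ)^{n−l} ∘ ψ^{l}`
for `1 ≤ n ≤ N`. -/
theorem pow_eq_q_alternating_sum_of_q_commute
    {k : Type*} [CommRing k] (N : ℕ) (hN : 2 ≤ N) (q : k)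
    (hq1 : q ^ N = 1)
    (hq2 : ∀ l : ℕ, 1 ≤ l → l ≤ N - 1 → q ^ l - 1 ∈ nonZeroDivisors k)
    {X : Type*} [AddCommGroup X] [Module k X]
    (φ ψ : Module.End k X) (hcomm : ψ * φ = q • (φ * ψ))
    (n : ℕ) (hn1 : 1 ≤ n) (hnN : n ≤ N)
    (c : ℕ → k) (hc : ∀ l ≤ n, QBinomSpec q N n l (c l)) :
    φ ^ n = ∑ l ∈ Finset.range (n + 1),
      ((-1 : k) ^ l * q ^ (l * (l - 1) / 2) * c l) • ((φ + ψ) ^ (n - l) * ψ ^ l) := by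
  have hq (i : ℕ) (hi : 1 ≤ i) (hiN : i < N) : qInt q i ∈ nonZeroDivisors k :=
    qInt_mem_nonZeroDivisors_of_pow_sub_one_mem (hq2 i hi (Nat.le_sub_one_of_lt hiN))
  exact pow_eq_q_alternating_sum_of_q_commute_general hq hcomm hnN hc
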